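/- Let G be a finite connected simple graph with edge set E, let w : E → ℝ≥0 be a weight function, and define the progress function f(H) := max_{T ∈ MST(G,w)} |H ∩ T| for H ⊆ E. Then f is submodular: for all A, B ⊆ E, f(A) + f(B) ≥ f(A ∪ B) + f(A ∩ B). Equivalently, for all S ⊆ E and all edges a, b ∈ E \ S with a ≠ b, f(S ∪ {a}) − f(S) ≥ f(S ∪ {a, b}) − f(S ∪ {b}). -/

import Mathlib

/-! The minimum spanning trees of `G` are the bases of a matroid, and `progress G w` is its rank
function, so submodularity of `progress` is submodularity of matroid rank.

The exchange property for minimum spanning trees comes from *symmetric* exchange for spanning trees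
(`IsSpanningTree.symm_exchange`): given `e = uv ∈ T₁ \ T₂`, the path of `T₂` from `u` to `v` has
an edge `f` crossing the cut of `T₁ - e`, and both `T₁ - e + f` and `T₂ - f + e` are spanning trees.
If `T₁` and `T₂` have minimum weight, minimality of `T₂` against `T₂ - f + e` gives `w f ≤ w e`, so
`T₁ - e + f` weighs no more than `T₁` and is again minimum. -/

open Finset
open scoped Classical

noncomputable section

variable {V : Type*}

/-- A spanning tree of `G`, as a finite set of edges: a subset of the edge set of `G`
whose induced subgraph is a (spanning) tree. -/
def IsSpanningTree [Fintype V] (G : SimpleGraph V) (T : Finset (Sym2 V)) : Prop :=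
  (T : Set (Sym2 V)) ⊆ G.edgeSet ∧ (SimpleGraph.fromEdgeSet (T : Set (Sym2 V))).IsTree

/-- `T` is a minimum spanning tree of `G` under weight function `w`. -/
def IsMST [Fintype V] (G : SimpleGraph V) (w : Sym2 V → NNReal) (T : Finset (Sym2 V)) : Prop :=
  IsSpanningTree G T ∧
    ∀ T' : Finset (Sym2 V), IsSpanningTree G T' → ∑ e ∈ T, w e ≤ ∑ e ∈ T', w e


/-- The progress function `f(H) = max_{T ∈ MST(G,w)} |H ∩ T|`: the maximum number of edges
of `H` that can simultaneously appear in a single minimum spanning tree of `G` under `w`. -/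
def progress [Fintype V] (G : SimpleGraph V) (w : Sym2 V → NNReal) (H : Finset (Sym2 V)) : ℕ :=
  (Finset.univ.filter (IsMST G w)).sup fun T => (H ∩ T).card

open SimpleGraph in
/-- Replacing an edge `uv` of a spanning tree by another edge of `G` gives a spanning tree as soon
as `u` and `v` remain connected: connectedness is preserved, and so is the number of edges. -/
lemma IsSpanningTree.swap [Fintype V] {G : SimpleGraph V} {T : Finset (Sym2 V)}
    (hT : IsSpanningTree G T) {u v : V} {f : Sym2 V} (he : s(u, v) ∈ T) (hf : f ∈ G.edgeSet)
    (hfT : f ∉ T)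
    (hr : (fromEdgeSet (insert f (T.erase s(u, v)) : Finset (Sym2 V)) : SimpleGraph V).Reachable
      u v) :
    IsSpanningTree G (insert f (T.erase s(u, v))) := by
  have hsub : ((insert f (T.erase s(u, v)) : Finset (Sym2 V)) : Set (Sym2 V)) ⊆ G.edgeSet := by
    intro x hx
    rcases Finset.mem_insert.1 (Finset.mem_coe.1 hx) with rfl | hx
    · exact hf
    · exact hT.1 (Finset.mem_of_mem_erase hx)
  have hedge : ∀ S : Finset (Sym2 V), (S : Set (Sym2 V)) ⊆ G.edgeSet →
      Nat.card (fromEdgeSet (S : Set (Sym2 V))).edgeSet = S.card := by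
    intro S hS
    have h1 : (fromEdgeSet (S : Set (Sym2 V))).edgeSet = S := by
      rw [edgeSet_fromEdgeSet]
      ext x
      simp only [Set.mem_sdiff, and_iff_left_iff_imp]
      intro hx hd
      exact G.not_isDiag_of_mem_edgeSet (hS hx) hd
    rw [h1]
    simp
  refine ⟨hsub, ?_⟩
  have h := isTree_iff_connected_and_card.1 hT.2
  rw [hedge T hT.1] at h
  rw [isTree_iff_connected_and_card, hedge _ hsub, Finset.card_insert_of_notMem (by simp [hfT]),
    Finset.card_erase_add_one he]
  refine ⟨?_, h.2⟩
  have := h.1.nonempty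
  refine ⟨fun a b => ?_⟩
  obtain ⟨p⟩ := h.1.preconnected a b
  induction p with
  | nil => rfl
  | @cons a c b hac _ ih =>
    refine Reachable.trans ?_ ih
    by_cases hx : s(a, c) = s(u, v)
    · rcases Sym2.eq_iff.1 hx with ⟨rfl, rfl⟩ | ⟨rfl, rfl⟩
      · exact hr
      · exact hr.symm
    · rw [fromEdgeSet_adj] at hac
      refine Adj.reachable ?_
      rw [fromEdgeSet_adj]
      refine ⟨?_, hac.2⟩
      have := Finset.mem_coe.1 hac.1
      simp [hx, this]

open SimpleGraph in
/-- Symmetric basis exchange for spanning trees. -/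
lemma IsSpanningTree.symm_exchange [Fintype V] {G : SimpleGraph V} {T₁ T₂ : Finset (Sym2 V)}
    (h₁ : IsSpanningTree G T₁) (h₂ : IsSpanningTree G T₂) {e : Sym2 V} (he₁ : e ∈ T₁)
    (he₂ : e ∉ T₂) :
    ∃ f ∈ T₂, f ∉ T₁ ∧ IsSpanningTree G (insert f (T₁.erase e)) ∧
      IsSpanningTree G (insert e (T₂.erase f)) := by
  induction e using Sym2.ind with
  | _ u v =>
  have huv : u ≠ v := (show G.Adj u v from h₁.1 he₁).ne
  set D : SimpleGraph V := fromEdgeSet (T₁.erase s(u, v) : Finset (Sym2 V)) with hD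
  have hDu : ¬ D.Reachable u v := by
    have hb := isAcyclic_iff_forall_isBridge.1 h₁.2.isAcyclic (e := s(u, v))
      (by rw [mem_edgeSet, fromEdgeSet_adj]; exact ⟨he₁, huv⟩)
    rw [isBridge_iff] at hb
    refine fun hr => hb (hr.mono ?_)
    intro a b hab
    simp [hD] at hab ⊢
    tauto
  -- The two sides of the cut: every vertex is joined to `u` or to `v` in `T₁ - uv`.
  have hcut : ∀ y, D.Reachable u y ∨ D.Reachable v y := by
    intro y
    by_contra hy
    obtain ⟨q⟩ := h₁.2.connected.preconnected u y
    obtain ⟨d, -, hd1, hd2⟩ := q.exists_boundary_dart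
      {z | D.Reachable u z ∨ D.Reachable v z} (Or.inl (Reachable.refl _)) hy
    apply hd2
    have had := d.adj
    rw [fromEdgeSet_adj] at had
    by_cases hx : s(d.fst, d.snd) = s(u, v)
    · rcases Sym2.eq_iff.1 hx with ⟨-, h⟩ | ⟨-, h⟩
      · right; rw [h]
      · left; rw [h]
    · have : D.Adj d.fst d.snd := by
        rw [hD, fromEdgeSet_adj]
        exact ⟨by simpa [hx] using had.1, had.2⟩
      exact hd1.imp (·.trans this.reachable) (·.trans this.reachable)
  obtain ⟨p, hp⟩ := (h₂.2.connected.preconnected u v).exists_isPath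
  obtain ⟨d, hdp, hd1, hd2⟩ := p.exists_boundary_dart {z | D.Reachable u z}
    (Reachable.refl _) hDu
  obtain ⟨⟨x, y⟩, hxy⟩ := d
  replace hd1 : D.Reachable u x := hd1
  replace hd2 : ¬ D.Reachable u y := hd2
  have hfp : s(x, y) ∈ p.edges := List.mem_map.2 ⟨_, hdp, rfl⟩
  have hxy' := hxy
  rw [fromEdgeSet_adj] at hxy'
  have hne : s(x, y) ≠ s(u, v) := by
    intro h
    rw [← h] at he₂
    exact he₂ hxy'.1
  have hfT : s(x, y) ∉ T₁ := by
    intro h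
    refine hd2 (hd1.trans (Adj.reachable ?_))
    rw [hD, fromEdgeSet_adj]
    exact ⟨by simpa [hne] using h, hxy'.2⟩
  refine ⟨s(x, y), hxy'.1, hfT, ?_, ?_⟩
  · refine h₁.swap he₁ (h₂.1 hxy'.1) hfT ?_
    have hle : D ≤ fromEdgeSet (insert s(x, y) (T₁.erase s(u, v)) : Finset (Sym2 V)) :=
      fromEdgeSet_mono (by simp)
    have hyv := (hcut y).resolve_left hd2
    refine (hd1.mono hle).trans (Reachable.trans (Adj.reachable ?_) (hyv.symm.mono hle))
    rw [fromEdgeSet_adj]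
    exact ⟨by simp, hxy'.2⟩
  · refine h₂.swap hxy'.1 (h₁.1 he₁) he₂ ?_
    -- `xy` lies on the cycle formed by `uv` and the path `p`.
    set C : SimpleGraph V := fromEdgeSet (insert s(u, v) T₂ : Finset (Sym2 V)) with hC
    have hle : fromEdgeSet (T₂ : Set (Sym2 V)) ≤ C := fromEdgeSet_mono (by simp)
    have hvu : C.Adj v u := by
      rw [hC, fromEdgeSet_adj]
      exact ⟨by simp [Sym2.eq_swap], huv.symm⟩
    have hcyc : (Walk.cons hvu (p.mapLe hle)).IsCycle := by
      rw [Walk.cons_isCycle_iff]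
      refine ⟨hp.mapLe hle, ?_⟩
      rw [Walk.edges_mapLe_eq_edges]
      intro h
      have := p.edges_subset_edgeSet h
      rw [mem_edgeSet, fromEdgeSet_adj, Sym2.eq_swap] at this
      exact he₂ this.1
    have := (adj_and_reachable_delete_edges_iff_exists_cycle.2
      ⟨_, _, hcyc, show s(x, y) ∈ _ by
        rw [Walk.edges_cons, Walk.edges_mapLe_eq_edges]; exact List.mem_cons_of_mem _ hfp⟩).2
    refine this.mono ?_
    intro a b hab
    simp [hC] at hab ⊢
    tauto

/-- Basis exchange for minimum spanning trees: in a symmetric exchange, minimality of `T₂` forces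
`w f ≤ w e`, so the modified `T₁` is still minimum. -/
lemma IsMST.exchange [Fintype V] {G : SimpleGraph V} {w : Sym2 V → NNReal}
    {T₁ T₂ : Finset (Sym2 V)} (h₁ : IsMST G w T₁) (h₂ : IsMST G w T₂) {e : Sym2 V}
    (he₁ : e ∈ T₁) (he₂ : e ∉ T₂) :
    ∃ f ∈ T₂, f ∉ T₁ ∧ IsMST G w (insert f (T₁.erase e)) := by
  obtain ⟨f, hf₂, hf₁, hs₁, hs₂⟩ := h₁.1.symm_exchange h₂.1 he₁ he₂
  refine ⟨f, hf₂, hf₁, hs₁, fun T' hT' => le_trans ?_ (h₁.2 T' hT')⟩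
  have hm := h₂.2 _ hs₂
  rw [Finset.sum_insert (by simp [he₂]), ← Finset.add_sum_erase _ _ hf₂] at hm
  rw [Finset.sum_insert (by simp [hf₁]), ← Finset.add_sum_erase _ _ he₁]
  gcongr
  exact le_of_add_le_add_right hm

lemma exists_isMST [Fintype V] {G : SimpleGraph V} (hG : G.Connected) (w : Sym2 V → NNReal) :
    ∃ T, IsMST G w T := by
  obtain ⟨F, hle, hF⟩ := hG.exists_isTree_le
  have hne : (Finset.univ.filter (IsSpanningTree G)).Nonempty := by
    refine ⟨F.edgeFinset, ?_⟩
    rw [Finset.mem_filter]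
    refine ⟨Finset.mem_univ _, ?_, ?_⟩
    · simpa using hle
    · simpa using hF
  obtain ⟨T, hT, hmin⟩ := Finset.exists_min_image _ (fun T => ∑ e ∈ T, w e) hne
  exact ⟨T, (Finset.mem_filter.1 hT).2, fun T' hT' =>
    hmin T' (Finset.mem_filter.2 ⟨Finset.mem_univ _, hT'⟩)⟩

/-- The matroid on `Sym2 V` whose bases are the minimum spanning trees of `G`. Pairs that are
not edges of `G` are loops. -/
def mstMatroid [Fintype V] (G : SimpleGraph V) (hG : G.Connected) (w : Sym2 V → NNReal) :
    Matroid (Sym2 V) :=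
  Matroid.ofExistsFiniteIsBase Set.univ (fun B => ∃ T : Finset (Sym2 V), IsMST G w T ∧ ↑T = B)
    (by
      obtain ⟨T, hT⟩ := exists_isMST hG w
      exact ⟨T, ⟨T, hT, rfl⟩, T.finite_toSet⟩)
    (by
      rintro _ _ ⟨T₁, h₁, rfl⟩ ⟨T₂, h₂, rfl⟩ e ⟨he₁, he₂⟩
      obtain ⟨f, hf₂, hf₁, hT⟩ := h₁.exchange h₂ he₁ he₂
      exact ⟨f, ⟨hf₂, hf₁⟩, _, hT, by simp⟩)
    (fun _ _ => Set.subset_univ _)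

lemma progress_eq_eRk [Fintype V] (G : SimpleGraph V) (hG : G.Connected) (w : Sym2 V → NNReal)
    (H : Finset (Sym2 V)) : (progress G w H : ℕ∞) = (mstMatroid G hG w).eRk H := by
  have hbase : ∀ T : Finset (Sym2 V), IsMST G w T → (mstMatroid G hG w).IsBase T :=
    fun T hT => ⟨T, hT, rfl⟩
  apply le_antisymm
  · obtain ⟨T₀, hT₀⟩ := exists_isMST hG w
    obtain ⟨T, hT, hmax⟩ := Finset.exists_mem_eq_sup (Finset.univ.filter (IsMST G w))
      ⟨T₀, by simpa using hT₀⟩ (fun T => (H ∩ T).card)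
    have hT' := hbase T (Finset.mem_filter.1 hT).2
    rw [progress, hmax, ← Set.encard_coe_eq_coe_finsetCard]
    exact (hT'.indep.subset (by simp)).encard_le_eRk_of_subset (by simp)
  · rw [Matroid.eRk_le_iff]
    intro I hI hInd
    obtain ⟨B, ⟨T, hT, rfl⟩, hIB⟩ := hInd.exists_isBase_superset
    refine (Set.encard_le_encard (t := ((H ∩ T : Finset (Sym2 V)) : Set (Sym2 V))) ?_).trans ?_
    · simpa using ⟨hI, hIB⟩
    · rw [Set.encard_coe_eq_coe_finsetCard]
      exact_mod_cast Finset.le_sup (f := fun T => (H ∩ T).card)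
        (Finset.mem_filter.2 ⟨Finset.mem_univ _, hT⟩)

/-- The progress function `f(H) = max_{T ∈ MST(G,w)} |H ∩ T|` is
submodular: for all `A, B ⊆ E`, `f(A) + f(B) ≥ f(A ∪ B) + f(A ∩ B)`. -/
theorem progress_submodular [Fintype V] (G : SimpleGraph V) (hG : G.Connected)
    (w : Sym2 V → NNReal) :
    ∀ A B : Finset (Sym2 V), (A : Set (Sym2 V)) ⊆ G.edgeSet → (B : Set (Sym2 V)) ⊆ G.edgeSet →
      progress G w (A ∪ B) + progress G w (A ∩ B) ≤ progress G w A + progress G w B := by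
  intro A B _ _
  have h := (mstMatroid G hG w).eRk_inter_add_eRk_union_le A B
  rw [← Finset.coe_inter, ← Finset.coe_union] at h
  simp only [← progress_eq_eRk] at h
  rw [add_comm]
  exact_mod_cast h
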